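/- arXiv:1007.2239 — 2 statements merged into one kernel-verified Lean document; each statement's English description precedes it below -/
import Mathlib

section
/- Let n ≥ 2 and m ≥ 2 be integers and let R_m = ℤ[x_1, ..., x_m]. If v ≥ 1 is an integer such that every element of the subring J(2^n, R_m) of R_m generated by all 2^n-th powers can be written as a signed sum of v 2^n-th powers, i.e. in the form Σ_{i=1}^v ε_i f_i^{2^n} with f_i ∈ R_m and ε_i ∈ {+1, −1}, then v · m ≥ m(m−1)/2; in particular v ≥ (m−1)/2. -/
/-!
The `2^n`-th powers satisfy a congruence on which the count rests. Put `q = 2^(n-1)`, let `i ≠ j`,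
and let `a`, `xᵢ`, `xⱼ`, `xᵢⱼ` be the coefficients of `1`, `Xᵢ`, `Xⱼ`, `XᵢXⱼ` in `g`. As
`g^q ≡ g(X^q)` modulo `2`, we have `g^(2q) ≡ g(X^q)²` modulo `4`, so the coefficient of `Xᵢ^q Xⱼ^q`
in `g^(2q)` is `2(a xᵢⱼ + xᵢ xⱼ)` modulo `4`, while that of `XᵢXⱼ` is
`2q (a^(2q-1) xᵢⱼ + (2q-1) a^(2q-2) xᵢ xⱼ)`. In `q` times the first plus the second, the terms with
`xᵢⱼ` cancel modulo `4q`, and `2q · (1+a)xᵢ · (1+a)xⱼ` remains.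

This combination is additive, and on a sum of the powers `(Xᵢ + Xⱼ)^(2^n)` over the edges of a
graph it detects adjacency. Writing that sum with `v` powers therefore expresses adjacency as a dot
product of vectors in `𝔽₂^v` attached to the vertices, and there are `2^(m choose 2)` graphs on `m`
vertices but only `2^(vm)` families of vectors.
-/

section FrobeniusLift

open MvPolynomial

variable {σ : Type*} (p : ℕ) [Fact p.Prime] (r : ℕ)

theorem expand_prime_pow_zmod (f : MvPolynomial σ (ZMod p)) :
    expand (p ^ r) f = f ^ p ^ r := by
  induction r with
  | zero => rw [pow_zero, expand_one_apply, pow_one]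
  | succ r ih => rw [pow_succ', expand_mul, ih, expand_zmod, ← pow_mul, mul_comm]

theorem prime_dvd_pow_prime_pow_sub_expand (g : MvPolynomial σ ℤ) :
    (p : MvPolynomial σ ℤ) ∣ g ^ p ^ r - expand (p ^ r) g := by
  have h : C (p : ℤ) ∣ g ^ p ^ r - expand (p ^ r) g := by
    rw [C_dvd_iff_zmod, map_sub, map_pow, map_expand, expand_prime_pow_zmod, sub_self]
  simpa using h

theorem coeff_smul_pow_prime_pow_modEq (k : ℕ) (d : σ →₀ ℕ) (g : MvPolynomial σ ℤ) :
    coeff (p ^ r • d) (g ^ p ^ (r + k)) ≡ coeff d (g ^ p ^ k) [ZMOD p ^ (k + 1)] := by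
  have h := dvd_sub_pow_of_dvd_sub (prime_dvd_pow_prime_pow_sub_expand p r g) k
  have hC : C ((p : ℤ) ^ (k + 1)) = (p : MvPolynomial σ ℤ) ^ (k + 1) := by simp
  rw [← pow_mul, ← pow_add, ← map_pow, ← hC, C_dvd_iff_dvd_coeff] at h
  have hd := h (p ^ r • d)
  rw [coeff_sub, coeff_expand_smul _ (pow_ne_zero r (Fact.out : p.Prime).ne_zero)] at hd
  exact (Int.modEq_iff_dvd.2 hd).symm

end FrobeniusLift

section MixedCoefficient

open MvPolynomial Finsupp

variable {σ R : Type*} [CommSemiring R] {i j : σ}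

theorem constantCoeff_pderiv (f : MvPolynomial σ R) :
    constantCoeff (pderiv i f) = coeff (single i 1) f := by
  simp [constantCoeff_eq, coeff_pderiv]

theorem constantCoeff_pderiv_pderiv (hij : i ≠ j) (f : MvPolynomial σ R) :
    constantCoeff (pderiv i (pderiv j f)) = coeff (single i 1 + single j 1) f := by
  simp [constantCoeff_eq, coeff_pderiv, hij]

theorem coeff_single_add_single_pow (hij : i ≠ j) (N : ℕ) (g : MvPolynomial σ R) :
    coeff (single i 1 + single j 1) (g ^ N) =
      N * (constantCoeff g ^ (N - 1) * coeff (single i 1 + single j 1) g +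
        (N - 1 : ℕ) * constantCoeff g ^ (N - 2) *
          (coeff (single i 1) g * coeff (single j 1) g)) := by
  simp only [← constantCoeff_pderiv_pderiv hij, ← constantCoeff_pderiv, pderiv_pow, pderiv_mul,
    Derivation.map_natCast, map_add, map_mul, map_pow, map_natCast, zero_mul, zero_add, Nat.sub_sub]
  ring

end MixedCoefficient

section PowerCongruence

open MvPolynomial Finsupp

variable {σ : Type*} {i j : σ} {n : ℕ}

/-- The functional `2^n · [Xᵢ^(2^n) Xⱼ^(2^n)] + [XᵢXⱼ]`, where `[M]` takes the coefficient of the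
monomial `M`. It is meant to be applied to sums of `2^(n+1)`-th powers. -/
noncomputable def mixedFunctional (n : ℕ) (i j : σ) : MvPolynomial σ ℤ →ₗ[ℤ] ℤ :=
  (2 : ℤ) ^ n • lcoeff ℤ (2 ^ n • (single i 1 + single j 1)) + lcoeff ℤ (single i 1 + single j 1)

/-- The linear coefficient of `g` at `Xᵢ`, multiplied by `1 + g(0)`; only its parity matters, and
the factor kills that parity when the constant coefficient of `g` is odd. -/
noncomputable def twistedLinearCoeff (i : σ) (g : MvPolynomial σ ℤ) : ℤ :=
  (1 + constantCoeff g) * coeff (single i 1) g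

theorem twistedLinearCoeff_sum_X [DecidableEq σ] (s : Finset σ) :
    twistedLinearCoeff i (∑ k ∈ s, X k) = if i ∈ s then 1 else 0 := by
  simp [twistedLinearCoeff, coeff_sum, coeff_single_X]

theorem mixed_terms_modEq_two {N : ℕ} (hN : Even N) (hN₂ : 2 < N) (a e x y : ℤ) :
    a * e + x * y + (a ^ (N - 1) * e + (N - 1 : ℕ) * a ^ (N - 2) * (x * y)) ≡
      (1 + a) * x * ((1 + a) * y) [ZMOD 2] := by
  have pow_eq (b : ZMod 2) {k : ℕ} (hk : k ≠ 0) : b ^ k = b := by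
    obtain ⟨k, rfl⟩ := Nat.exists_eq_succ_of_ne_zero hk
    have hb : IsIdempotentElem b := (by decide : ∀ b : ZMod 2, b * b = b) b
    exact hb.pow_succ_eq k
  have hodd : ((N - 1 : ℕ) : ZMod 2) = 1 :=
    ZMod.natCast_eq_one_iff_odd.2 (Nat.Even.sub_odd (by omega) hN odd_one)
  refine (ZMod.intCast_eq_intCast_iff _ _ 2).1 ?_
  push_cast
  rw [pow_eq _ (by omega), pow_eq _ (by omega), hodd]
  generalize (a : ZMod 2) = a, (e : ZMod 2) = e, (x : ZMod 2) = x, (y : ZMod 2) = y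
  decide +revert

theorem mixedFunctional_pow_modEq (hij : i ≠ j) (hn : n ≠ 0) (g : MvPolynomial σ ℤ) :
    mixedFunctional n i j (g ^ 2 ^ (n + 1)) ≡
      2 ^ (n + 1) * (twistedLinearCoeff i g * twistedLinearCoeff j g) [ZMOD 2 ^ (n + 1) * 2] := by
  set a := constantCoeff g
  set e := coeff (single i 1 + single j 1) g
  set x := coeff (single i 1) g
  set y := coeff (single j 1) g
  have high : coeff (2 ^ n • (single i 1 + single j 1)) (g ^ 2 ^ (n + 1)) ≡
      2 * (a * e + x * y) [ZMOD 4] := by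
    have h := coeff_smul_pow_prime_pow_modEq 2 n 1 (single i 1 + single j 1) g
    rw [pow_one, coeff_single_add_single_pow hij] at h
    simpa only [Nat.cast_ofNat, Nat.add_one_sub_one, Nat.sub_self, Nat.cast_one, pow_one, pow_zero,
      mul_one, one_mul, Nat.reduceAdd, Int.reducePow] using h
  have low := coeff_single_add_single_pow hij (2 ^ (n + 1)) g
  have parity := mixed_terms_modEq_two (N := 2 ^ (n + 1)) (by simp [parity_simps])
    (lt_self_pow₀ one_lt_two (by omega)) a e x y
  calc mixedFunctional n i j (g ^ 2 ^ (n + 1))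
      = 2 ^ n * coeff (2 ^ n • (single i 1 + single j 1)) (g ^ 2 ^ (n + 1)) +
          coeff (single i 1 + single j 1) (g ^ 2 ^ (n + 1)) := by
        simp [mixedFunctional]
    _ ≡ 2 ^ n * (2 * (a * e + x * y)) +
          coeff (single i 1 + single j 1) (g ^ 2 ^ (n + 1)) [ZMOD 2 ^ (n + 1) * 2] := by
        rw [show (2 : ℤ) ^ (n + 1) * 2 = 2 ^ n * 4 by ring]
        exact high.mul_left'.add_right _
    _ = 2 ^ (n + 1) * (a * e + x * y + (a ^ (2 ^ (n + 1) - 1) * e +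
          (2 ^ (n + 1) - 1 : ℕ) * a ^ (2 ^ (n + 1) - 2) * (x * y))) := by
        rw [low]; push_cast; ring
    _ ≡ 2 ^ (n + 1) * (twistedLinearCoeff i g * twistedLinearCoeff j g)
          [ZMOD 2 ^ (n + 1) * 2] := parity.mul_left'

theorem mixedFunctional_sum_odd_smul_pow_modEq {ι : Type*} (hij : i ≠ j) (hn : n ≠ 0)
    (s : Finset ι) {c : ι → ℤ} (hc : ∀ l ∈ s, Odd (c l)) (g : ι → MvPolynomial σ ℤ) :
    mixedFunctional n i j (∑ l ∈ s, c l • g l ^ 2 ^ (n + 1)) ≡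
      2 ^ (n + 1) * ∑ l ∈ s, twistedLinearCoeff i (g l) * twistedLinearCoeff j (g l)
        [ZMOD 2 ^ (n + 1) * 2] := by
  rw [map_sum, Finset.mul_sum]
  refine Int.ModEq.sum fun l hl => ?_
  set b := twistedLinearCoeff i (g l) * twistedLinearCoeff j (g l)
  have hodd : c l * b ≡ b [ZMOD 2] := by
    have hcl : c l ≡ 1 [ZMOD 2] := Int.odd_iff.1 (hc l hl)
    simpa using hcl.mul_right b
  calc mixedFunctional n i j (c l • g l ^ 2 ^ (n + 1))
      = c l * mixedFunctional n i j (g l ^ 2 ^ (n + 1)) := by rw [map_zsmul, smul_eq_mul]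
    _ ≡ c l * (2 ^ (n + 1) * b) [ZMOD 2 ^ (n + 1) * 2] :=
        (mixedFunctional_pow_modEq hij hn (g l)).mul_left _
    _ = 2 ^ (n + 1) * (c l * b) := by ring
    _ ≡ 2 ^ (n + 1) * b [ZMOD 2 ^ (n + 1) * 2] := hodd.mul_left'

end PowerCongruence

section DotProductRepresentation

theorem natCard_simpleGraph (σ : Type*) [Finite σ] :
    Nat.card (SimpleGraph σ) = 2 ^ (Nat.card σ).choose 2 := by
  classical
  have := Fintype.ofFinite σ
  let edges : SimpleGraph σ ≃ Finset {e : Sym2 σ // ¬ e.IsDiag} :=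
    { toFun G := {e | e.1 ∈ G.edgeSet}
      invFun A := SimpleGraph.fromEdgeSet (A.map (Function.Embedding.subtype _))
      left_inv G := by ext i j; simpa using SimpleGraph.Adj.ne
      right_inv A := by ext ⟨e, he⟩; simp [he] }
  rw [Nat.card_congr edges, Nat.card_eq_fintype_card, Fintype.card_finset,
    Sym2.card_subtype_not_diag, Nat.card_eq_fintype_card]

variable {σ ι K : Type*} [Fintype ι] [Mul K] [AddCommMonoid K] [One K] {G G' : SimpleGraph σ}

/-- The vectors `u i` represent `G` by dot products: distinct vertices are adjacent exactly when
the dot product of their vectors is `1`. The products `u i ⬝ᵥ u i` are unconstrained. -/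
def IsDotProductRepresentation (G : SimpleGraph σ) (u : σ → ι → K) : Prop :=
  ∀ ⦃i j⦄, i ≠ j → (G.Adj i j ↔ u i ⬝ᵥ u j = 1)

theorem IsDotProductRepresentation.graph_eq {u : σ → ι → K}
    (h : IsDotProductRepresentation G u) (h' : IsDotProductRepresentation G' u) : G = G' := by
  ext i j
  rcases eq_or_ne i j with rfl | hij
  · simp
  · rw [h hij, h' hij]

theorem two_pow_choose_two_le_of_forall_isDotProductRepresentation [Finite σ] [Finite K]
    (h : ∀ G : SimpleGraph σ, ∃ u : σ → ι → K, IsDotProductRepresentation G u) :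
    2 ^ (Nat.card σ).choose 2 ≤ Nat.card K ^ (Nat.card ι * Nat.card σ) := by
  choose u hu using h
  have hinj : Function.Injective u := fun G G' huu' => (hu G).graph_eq (huu' ▸ hu G')
  have hcard := Nat.card_le_card_of_injective u hinj
  rwa [natCard_simpleGraph, Nat.card_fun, Nat.card_fun, ← pow_mul] at hcard

end DotProductRepresentation

section EdgePowerSum

open MvPolynomial

variable {σ : Type*} [Fintype σ] [DecidableEq σ] (G : SimpleGraph σ) [DecidableRel G.Adj]

/-- The sum of the powers `(Xᵢ + Xⱼ)^k` over the edges `{i, j}` of `G`: the polynomial encoding `G`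
in the counting argument. -/
noncomputable def edgePowerSum (k : ℕ) : MvPolynomial σ ℤ :=
  ∑ e ∈ G.edgeFinset, (∑ i ∈ e.toFinset, X i) ^ k

theorem edgePowerSum_mem_closure (k : ℕ) :
    edgePowerSum G k ∈ AddSubmonoid.closure (Set.range fun g : MvPolynomial σ ℤ => g ^ k) :=
  sum_mem fun _ _ => AddSubmonoid.subset_closure ⟨_, rfl⟩

theorem mixedFunctional_edgePowerSum_modEq {i j : σ} (hij : i ≠ j) {n : ℕ} (hn : n ≠ 0) :
    mixedFunctional n i j (edgePowerSum G (2 ^ (n + 1))) ≡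
      2 ^ (n + 1) * (if G.Adj i j then 1 else 0) [ZMOD 2 ^ (n + 1) * 2] := by
  have hterm (e : Sym2 σ) : twistedLinearCoeff i (∑ k ∈ e.toFinset, X k) *
      twistedLinearCoeff j (∑ k ∈ e.toFinset, X k) = if e = s(i, j) then 1 else 0 := by
    simp only [twistedLinearCoeff_sum_X, Sym2.mem_toFinset, ite_zero_mul_ite_zero, mul_one,
      Sym2.mem_and_mem_iff hij]
  have h := mixedFunctional_sum_odd_smul_pow_modEq hij hn G.edgeFinset
    (c := 1) (fun _ _ => odd_one) (fun e => ∑ k ∈ e.toFinset, X k)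
  simpa only [edgePowerSum, Pi.one_apply, one_smul, hterm, Finset.sum_ite_eq',
    SimpleGraph.mem_edgeFinset, SimpleGraph.mem_edgeSet] using h

theorem isDotProductRepresentation_of_edgePowerSum_eq {ι : Type*} [Fintype ι] {n : ℕ} (hn : n ≠ 0)
    {c : ι → ℤ} (hc : ∀ l, Odd (c l)) {g : ι → MvPolynomial σ ℤ}
    (hg : edgePowerSum G (2 ^ (n + 1)) = ∑ l, c l • g l ^ 2 ^ (n + 1)) :
    IsDotProductRepresentation G fun i l => (twistedLinearCoeff i (g l) : ZMod 2) := by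
  intro i j hij
  have hmod : ∑ l, twistedLinearCoeff i (g l) * twistedLinearCoeff j (g l) ≡
      if G.Adj i j then 1 else 0 [ZMOD 2] := by
    have hpow := mixedFunctional_sum_odd_smul_pow_modEq hij hn Finset.univ (fun l _ => hc l) g
    rw [← hg] at hpow
    exact (hpow.symm.trans (mixedFunctional_edgePowerSum_modEq G hij hn)).mul_left_cancel'
      (by positivity)
  have hdot := (ZMod.intCast_eq_intCast_iff _ _ 2).2 hmod
  push_cast at hdot
  rw [dotProduct, hdot]
  simp

end EdgePowerSum

theorem le_two_mul_add_one_of_choose_two_le {m v : ℕ} (h : m.choose 2 ≤ v * m) :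
    m ≤ 2 * v + 1 := by
  rcases m with _ | k
  · exact Nat.zero_le _
  · have hk : (k + 1) * k ≤ (k + 1) * (2 * v) :=
      calc (k + 1) * k = (k + 1).choose 2 * 2 := by
            simpa using Nat.add_one_mul_choose_eq k 1
        _ ≤ v * (k + 1) * 2 := Nat.mul_le_mul_right 2 h
        _ = (k + 1) * (2 * v) := by ring
    exact Nat.succ_le_succ (Nat.le_of_mul_le_mul_left hk k.succ_pos)

theorem exists_odd_intCast_eq_of_eq_one_or_eq_neg_one {R : Type*} [Ring R] {x : R}
    (hx : x = 1 ∨ x = -1) : ∃ c : ℤ, Odd c ∧ (c : R) = x := by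
  rcases hx with rfl | rfl
  · exact ⟨1, odd_one, Int.cast_one⟩
  · exact ⟨-1, odd_one.neg, by simp⟩

theorem stmt_1_general {σ ι : Type*} [Fintype σ] [Fintype ι] {n : ℕ} (hn : 2 ≤ n)
    (h : ∀ f ∈ AddSubmonoid.closure (Set.range fun g : MvPolynomial σ ℤ => g ^ 2 ^ n),
      ∃ (c : ι → ℤ) (g : ι → MvPolynomial σ ℤ),
        (∀ l, Odd (c l)) ∧ f = ∑ l, c l • g l ^ 2 ^ n) :
    Fintype.card σ ≤ 2 * Fintype.card ι + 1 := by
  classical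
  obtain ⟨n, rfl⟩ := Nat.exists_eq_add_of_le' hn
  have hrep (G : SimpleGraph σ) : ∃ u : σ → ι → ZMod 2, IsDotProductRepresentation G u := by
    obtain ⟨c, g, hc, hg⟩ := h _ (edgePowerSum_mem_closure G _)
    exact ⟨_, isDotProductRepresentation_of_edgePowerSum_eq G n.succ_ne_zero hc hg⟩
  have hcard := two_pow_choose_two_le_of_forall_isDotProductRepresentation hrep
  simp only [Nat.card_eq_fintype_card, ZMod.card] at hcard
  exact le_two_mul_add_one_of_choose_two_le ((Nat.pow_le_pow_iff_right one_lt_two).1 hcard)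

/-- If every element of the subring of `ℤ[x₁,…,xₘ]` generated by `2^n`-th powers is a
signed sum of `v` `2^n`-th powers, then `v·m ≥ m(m-1)/2`; in particular `v ≥ (m-1)/2`. -/
theorem stmt_1 (n m v : ℕ) (hn : 2 ≤ n) (hm : 2 ≤ m) (hv : 1 ≤ v)
    (h : ∀ f ∈ Subring.closure (Set.range fun g : MvPolynomial (Fin m) ℤ => g ^ (2 ^ n)),
      ∃ (g : Fin v → MvPolynomial (Fin m) ℤ) (ε : Fin v → MvPolynomial (Fin m) ℤ),
        (∀ i, ε i = 1 ∨ ε i = -1) ∧ f = ∑ i, ε i * g i ^ (2 ^ n)) :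
    2 * (v * m) ≥ m * (m - 1) ∧ 2 * v ≥ m - 1 := by
  have hle : m ≤ 2 * v + 1 := by
    simpa using stmt_1_general (σ := Fin m) (ι := Fin v) hn fun f hf => by
      obtain ⟨g, ε, hε, rfl⟩ := h f <| AddSubmonoid.closure_le
        (S := (Subring.closure _).toAddSubmonoid).2 Subring.subset_closure hf
      choose c hc hcε using fun i => exists_odd_intCast_eq_of_eq_one_or_eq_neg_one (hε i)
      exact ⟨c, g, hc, by simp only [zsmul_eq_mul, hcε]⟩
  have hsub : m - 1 ≤ 2 * v := by omega
  exact ⟨(Nat.mul_le_mul_left m hsub).trans_eq (by ring), hsub⟩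
end

section
/- Let n ≥ 2 be an integer. For every integer v ≥ 1 there exist an integer m ≥ 2 and an element g of the subring J(2^n, R_m) of R_m = ℤ[x_1, ..., x_m] generated by all 2^n-th powers, such that g cannot be written in the form Σ_{t=1}^v ε_t f_t^{2^n} with f_t ∈ R_m and ε_t ∈ {+1, −1}. In fact any m with m − 1 > 2v works. -/
/-!
The sum of the `2 ^ n`-th powers of more than `v` distinct variables is not a `ℤ`-linear
combination of `v` such powers. Consider a relation `∑ e_t f_t ^ (2 ^ n) = 0` with integers `e_t`,
and let `c_t`, `∇_t`, `H_t` be the value, gradient and Hessian of `f_t` at the origin.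

* The Hessian of `f_t ^ (2 ^ n)` at the origin is divisible by `2 ^ n`; cancelling this factor from
  the Hessian of the relation and reducing modulo `2` gives `∑ e_t c_t (∇_t ∇_tᵀ + H_t) ≡ 0`.
* Since `f(x) ^ (2 ^ n) ≡ f(x ^ (2 ^ (n - 1))) ^ 2` modulo `4`, where the substitution is made in
  every variable, also `∑ e_t f_t ^ 2 ≡ 0` modulo `4`; half of its Hessian at the origin gives
  `∑ e_t (∇_t ∇_tᵀ + c_t H_t) ≡ 0` modulo `2`.

The difference `∑ e_t (1 - c_t) ∇_t ∇_tᵀ ≡ 0` no longer involves the Hessians. Each variable `X i`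
contributes the elementary matrix `E_ii` to it, so an identity matrix of size larger than `v` would
be a sum of `v` matrices of rank at most one over `𝔽₂`.
-/

section PowerRelations

open MvPolynomial

variable {σ ι : Type*} [Fintype ι] {e : ι → ℤ} {f : ι → MvPolynomial σ ℤ}

theorem constantCoeff_pderiv_pderiv_pow {R : Type*} [CommSemiring R] (a b : σ)
    (f : MvPolynomial σ R) (k : ℕ) :
    constantCoeff (pderiv a (pderiv b (f ^ (k + 2)))) =
      (k + 2) * (constantCoeff f ^ k *
        ((k + 1) * (constantCoeff (pderiv a f) * constantCoeff (pderiv b f)) +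
          constantCoeff f * constantCoeff (pderiv a (pderiv b f)))) := by
  have pderiv_pow_succ (i : σ) (l : ℕ) :
      pderiv i (f ^ (l + 1)) = C ((l : R) + 1) * (f ^ l * pderiv i f) := by
    rw [pderiv_pow, Nat.add_sub_cancel, mul_assoc]; simp
  rw [pderiv_pow_succ, pderiv_C_mul, pderiv_mul, pderiv_pow_succ]
  simp only [map_mul, map_add, map_pow, constantCoeff_C]
  push_cast
  ring

theorem pow_prime_pow_eq_expand {p : ℕ} [Fact p.Prime] (n : ℕ) (f : MvPolynomial σ (ZMod p)) :
    f ^ p ^ n = expand (p ^ n) f := by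
  induction n with
  | zero => simp
  | succ n ih => rw [pow_succ, pow_mul, ih, ← expand_zmod, mul_comm, expand_mul]

theorem prime_dvd_pow_sub_expand {p : ℕ} [Fact p.Prime] (n : ℕ) (f : MvPolynomial σ ℤ) :
    (p : MvPolynomial σ ℤ) ∣ f ^ p ^ n - expand (p ^ n) f := by
  have hdvd : C (p : ℤ) ∣ f ^ p ^ n - expand (p ^ n) f := by
    rw [C_dvd_iff_zmod, map_sub, map_pow, map_expand, pow_prime_pow_eq_expand, sub_self]
  exact_mod_cast hdvd

theorem C_dvd_of_C_dvd_expand {R : Type*} [CommSemiring R] {q : ℕ} (hq : q ≠ 0) {r : R}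
    {f : MvPolynomial σ R} (h : C r ∣ expand q f) : C r ∣ f := by
  rw [C_dvd_iff_dvd_coeff] at h ⊢
  intro d
  simpa only [coeff_expand_smul q hq] using h (q • d)

theorem prime_pow_dvd_sum_zsmul_pow {p : ℕ} [hp : Fact p.Prime] {n k : ℕ}
    (h : ∑ t, e t • f t ^ p ^ (n + k) = 0) :
    C ((p : ℤ) ^ (k + 1)) ∣ ∑ t, e t • f t ^ p ^ k := by
  refine C_dvd_of_C_dvd_expand (pow_ne_zero n hp.out.ne_zero) ?_
  have hterm (t : ι) :
      C ((p : ℤ) ^ (k + 1)) ∣ f t ^ p ^ (n + k) - expand (p ^ n) (f t ^ p ^ k) := by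
    simpa [pow_add, pow_mul] using dvd_sub_pow_of_dvd_sub (prime_dvd_pow_sub_expand n (f t)) k
  have hsum := Finset.dvd_sum fun t (_ : t ∈ Finset.univ) => dvd_smul_of_dvd (e t) (hterm t)
  simpa only [smul_sub, Finset.sum_sub_distrib, h, zero_sub, dvd_neg, map_sum, map_zsmul] using hsum

theorem even_sum_constantCoeff_mul_of_sum_zsmul_pow_eq_zero {q : ℕ} (hq : Even q) (hq2 : 2 < q)
    (h : ∑ t, e t • f t ^ q = 0) (a b : σ) :
    Even (∑ t, e t * (constantCoeff (f t) *
      (constantCoeff (pderiv a (f t)) * constantCoeff (pderiv b (f t)) +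
        constantCoeff (pderiv a (pderiv b (f t)))))) := by
  obtain ⟨k, rfl⟩ := Nat.exists_eq_add_of_le' hq2.le
  have hk : Even k := by simpa [Nat.even_add] using hq
  have hk0 : k ≠ 0 := by omega
  have hessian_div : ∑ t, e t * (constantCoeff (f t) ^ k *
      ((k + 1) * (constantCoeff (pderiv a (f t)) * constantCoeff (pderiv b (f t))) +
        constantCoeff (f t) * constantCoeff (pderiv a (pderiv b (f t))))) = 0 := by
    have hessian := congrArg (fun g => constantCoeff (pderiv a (pderiv b g))) h
    simp only [map_sum, map_zsmul, constantCoeff_pderiv_pderiv_pow, smul_eq_mul, map_zero,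
      mul_left_comm (e _) ((k : ℤ) + 2), ← Finset.mul_sum] at hessian
    exact (mul_eq_zero.mp hessian).resolve_left (by positivity)
  rw [← sub_zero (∑ t, _), ← hessian_div, ← Finset.sum_sub_distrib]
  refine Finset.even_sum _ fun t _ => ?_
  simp only [Int.even_sub, Int.even_mul, Int.even_add, Int.even_pow, Int.even_coe_nat]
  grind

theorem even_sum_hessian_sq_of_sum_zsmul_pow_eq_zero {n : ℕ}
    (h : ∑ t, e t • f t ^ 2 ^ (n + 1) = 0) (a b : σ) :
    Even (∑ t, e t * (constantCoeff (pderiv a (f t)) * constantCoeff (pderiv b (f t)) +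
      constantCoeff (f t) * constantCoeff (pderiv a (pderiv b (f t))))) := by
  obtain ⟨r, hr⟩ := prime_pow_dvd_sum_zsmul_pow h
  have hessian := congrArg (fun g => constantCoeff (pderiv a (pderiv b g))) hr
  have hessian_sq (g : MvPolynomial σ ℤ) := constantCoeff_pderiv_pderiv_pow a b g 0
  simp only [pow_one, map_sum, map_zsmul, zero_add, hessian_sq, smul_eq_mul, pderiv_C_mul, map_mul,
    constantCoeff_C, Nat.cast_zero, pow_zero, one_mul, mul_left_comm (e _), ← Finset.mul_sum]
    at hessian
  refine even_iff_two_dvd.mpr ⟨constantCoeff (pderiv a (pderiv b r)), ?_⟩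
  push_cast at hessian
  linarith

theorem even_sum_gradient_of_sum_zsmul_pow_eq_zero {n : ℕ} (hn : 2 ≤ n)
    (h : ∑ t, e t • f t ^ 2 ^ n = 0) (a b : σ) :
    Even (∑ t, e t * (1 - constantCoeff (f t)) *
      constantCoeff (pderiv a (f t)) * constantCoeff (pderiv b (f t))) := by
  obtain ⟨l, rfl⟩ := Nat.exists_eq_add_of_le' (one_le_two.trans hn)
  have hpow : 2 < 2 ^ (l + 1) := by simpa using Nat.pow_lt_pow_right one_lt_two hn
  have hpow_even : Even (2 ^ (l + 1)) := by simp [Nat.even_pow]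
  have hdiff := dvd_sub (even_sum_hessian_sq_of_sum_zsmul_pow_eq_zero h a b).two_dvd
    (even_sum_constantCoeff_mul_of_sum_zsmul_pow_eq_zero hpow_even hpow h a b).two_dvd
  rw [← Finset.sum_sub_distrib] at hdiff
  rw [even_iff_two_dvd]
  convert hdiff using 2 with t
  ring

theorem card_le_card_of_matrix_mul_eq_one {R m n : Type*} [CommRing R] [Nontrivial R]
    [Fintype m] [DecidableEq m] [Fintype n] {A : Matrix m n R} {B : Matrix n m R} (h : A * B = 1) :
    Fintype.card m ≤ Fintype.card n :=
  calc Fintype.card m = (A * B).rank := by rw [h, Matrix.rank_one]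
    _ ≤ A.rank := Matrix.rank_mul_le_left A B
    _ ≤ Fintype.card n := A.rank_le_card_width

theorem sum_X_pow_ne_sum_zsmul_pow {n : ℕ} (hn : 2 ≤ n) {s : Finset σ}
    (hs : Fintype.card ι < s.card) (f : ι → MvPolynomial σ ℤ) (e : ι → ℤ) :
    ∑ i ∈ s, X i ^ 2 ^ n ≠ ∑ t, e t • f t ^ 2 ^ n := by
  classical
  intro h
  let gradient (t : ι) (i : s) : ℤ := constantCoeff (pderiv (i : σ) (f t))
  let A : Matrix s ι (ZMod 2) :=
    .of fun i t => (e t * (1 - constantCoeff (f t)) * gradient t i : ℤ)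
  let B : Matrix ι s (ZMod 2) := .of fun t j => (gradient t j : ℤ)
  have hrel : ∑ t : ι ⊕ s, Sum.elim e (fun _ => -1) t •
      Sum.elim f (fun i : s => X i.1) t ^ 2 ^ n = 0 := by
    simp only [Fintype.sum_sum_type, Sum.elim_inl, Sum.elim_inr, neg_one_zsmul,
      Finset.sum_neg_distrib, ← h]
    rw [Finset.sum_coe_sort s (X · ^ 2 ^ n), add_neg_cancel]
  have hAB : A * B = 1 := by
    ext i j
    have heven := even_sum_gradient_of_sum_zsmul_pow_eq_zero hn hrel i.1 j.1
    rw [← ZMod.intCast_eq_zero_iff_even] at heven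
    rw [Matrix.mul_apply, Matrix.one_apply, ← CharTwo.add_eq_zero]
    simpa [A, B, gradient, Fintype.sum_sum_type, pderiv_X, Pi.single_apply, eq_comm (a := j)]
      using heven
  have hcard := card_le_card_of_matrix_mul_eq_one hAB
  rw [Fintype.card_coe] at hcard
  omega

theorem stmt_15_general {n : ℕ} (hn : 2 ≤ n) {s : Finset σ} (hs : Fintype.card ι < s.card) :
    ∃ g ∈ Subring.closure (Set.range fun h : MvPolynomial σ ℤ => h ^ 2 ^ n),
      ¬ ∃ f ε : ι → MvPolynomial σ ℤ,
        (∀ t, ε t = 1 ∨ ε t = -1) ∧ g = ∑ t, ε t * f t ^ 2 ^ n := by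
  refine ⟨∑ i ∈ s, X i ^ 2 ^ n,
    sum_mem fun i _ => Subring.subset_closure (Set.mem_range_self (X i)), ?_⟩
  rintro ⟨f, ε, hε, hsum⟩
  have hint (t : ι) : ∃ z : ℤ, ε t = z :=
    (hε t).elim (fun h => ⟨1, by simp [h]⟩) fun h => ⟨-1, by simp [h]⟩
  choose e he using hint
  refine sum_X_pow_ne_sum_zsmul_pow hn hs f e (hsum.trans ?_)
  simp only [he, zsmul_eq_mul]

end PowerRelations

/-- For `n ≥ 2` and any `v ≥ 1`, there exist `m ≥ 2` and an element `g` of the subring of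
`ℤ[x₁,…,xₘ]` generated by all `2^n`-th powers which is not a signed sum of `v` `2^n`-th
powers; in fact any `m` with `m - 1 > 2v` works. -/
theorem stmt_15 (n : ℕ) (hn : 2 ≤ n) :
    ∀ v : ℕ, 1 ≤ v →
      (∃ m : ℕ, 2 ≤ m ∧
        ∃ g ∈ Subring.closure (Set.range fun h : MvPolynomial (Fin m) ℤ => h ^ (2 ^ n)),
          ¬ ∃ (f : Fin v → MvPolynomial (Fin m) ℤ) (ε : Fin v → MvPolynomial (Fin m) ℤ),
            (∀ t, ε t = 1 ∨ ε t = -1) ∧ g = ∑ t, ε t * f t ^ (2 ^ n)) ∧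
      (∀ m : ℕ, 2 * v < m - 1 →
        ∃ g ∈ Subring.closure (Set.range fun h : MvPolynomial (Fin m) ℤ => h ^ (2 ^ n)),
          ¬ ∃ (f : Fin v → MvPolynomial (Fin m) ℤ) (ε : Fin v → MvPolynomial (Fin m) ℤ),
            (∀ t, ε t = 1 ∨ ε t = -1) ∧ g = ∑ t, ε t * f t ^ (2 ^ n)) := by
  exact fun v hv => ⟨⟨v + 1, by omega, stmt_15_general hn (s := .univ) (by simp)⟩,
    fun m hm => stmt_15_general hn (s := .univ) (by simp; omega)⟩
end
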